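/- (Weak monotonicity formula) Let n ≥ 1, m ≥ 2, and let u = (u_1,…,u_m) be a solution of system (S) on ℝⁿ with H̃(u(x)) ≤ 0 for all x ∈ ℝⁿ. Let α ∈ ℝ satisfy α ≥ 2sΦ'(s)/Φ(s) for every s > 0 (i.e. α ≥ α* := sup_{s>0} 2sΦ'(s)/Φ(s)). Then the function I_α(r) := r^{α−n} ∫_{B_r} [ ∑_{i=1}^m Φ(|∇u_i|²) − 2H̃(u) ] dx is nondecreasing in r on (0,∞): I_α(r₁) ≤ I_α(r₂) whenever 0 < r₁ ≤ r₂. -/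

import Mathlib

open MeasureTheory Metric Finset Filter
open scoped RealInnerProductSpace

noncomputable section

/-- Divergence of a vector field on Euclidean space. -/
def vdiv {n : ℕ} (F : EuclideanSpace ℝ (Fin n) → EuclideanSpace ℝ (Fin n))
    (x : EuclideanSpace ℝ (Fin n)) : ℝ :=
  ∑ i, fderiv ℝ F x (EuclideanSpace.single i 1) i

/-! Let `e` be the energy density and `P x = ∑ᵢ 2 ⟪∇uᵢ, x⟫ Φ'(|∇uᵢ|²) ∇uᵢ`. Since the Hessians
of the `uᵢ` are symmetric, the equations give the Pohozaev-type identity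
`⟪∇e, x⟫ = div P - ∑ᵢ 2 Φ'(|∇uᵢ|²) |∇uᵢ|²`, so the growth condition `2 s Φ'(s) ≤ α Φ(s)` and
`H̃(u) ≤ 0` imply `div P ≤ α e + ⟪∇e, x⟫`.

Rescaling to the unit ball turns `r ^ (α - n) * ∫_{B_r} e` into `r ^ α * ∫_{B_1} e (r y) dy`, whose
derivative is formally `r ^ (α - 1) * ∫_{B_1} (α e + ⟪∇e, x⟫)(r y) dy`. This is bounded below by
`r ^ (α - 1) * ∫_{B_1} (div P)(r y) dy`, which is nonnegative by the divergence theorem because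
`⟪P x, x⟫ = ∑ᵢ 2 Φ'(|∇uᵢ|²) ⟪∇uᵢ, x⟫² ≥ 0`. To avoid surface integrals, the indicator of `B_1` is
replaced by a smooth radially decreasing cutoff `w`, for which `∫ w div P = -∫ ⟪∇w, P⟫ ≥ 0`, and
monotonicity passes to the limit as `w` tends to the indicator. -/

section Divergence

variable {n : ℕ} {F : EuclideanSpace ℝ (Fin n) → EuclideanSpace ℝ (Fin n)}
  {w : EuclideanSpace ℝ (Fin n) → ℝ} {x : EuclideanSpace ℝ (Fin n)}

theorem sum_apply_single_mul (L : EuclideanSpace ℝ (Fin n) →L[ℝ] ℝ)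
    (v : EuclideanSpace ℝ (Fin n)) :
    ∑ i, L (EuclideanSpace.single i 1) * v i = L v := by
  conv_rhs => rw [← (EuclideanSpace.basisFun (Fin n) ℝ).sum_repr v]
  simp [mul_comm]

theorem vdiv_smul (hw : DifferentiableAt ℝ w x) (hF : DifferentiableAt ℝ F x) :
    vdiv (fun y => w y • F y) x = w x * vdiv F x + fderiv ℝ w x (F x) := by
  rw [← sum_apply_single_mul]
  simp [vdiv, fderiv_fun_smul hw hF, Finset.mul_sum, Finset.sum_add_distrib]

theorem vdiv_sum {ι : Type*} {s : Finset ι}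
    {F : ι → EuclideanSpace ℝ (Fin n) → EuclideanSpace ℝ (Fin n)}
    (hF : ∀ i ∈ s, DifferentiableAt ℝ (F i) x) :
    vdiv (fun y => ∑ i ∈ s, F i y) x = ∑ i ∈ s, vdiv (F i) x := by
  unfold vdiv
  rw [fderiv_fun_sum hF, Finset.sum_comm]
  simp

theorem vdiv_comp_smul (F : EuclideanSpace ℝ (Fin n) → EuclideanSpace ℝ (Fin n)) (r : ℝ)
    (x : EuclideanSpace ℝ (Fin n)) :
    vdiv (fun y => F (r • y)) x = r * vdiv F (r • x) := by
  simp [vdiv, fderiv_comp_smul, Finset.mul_sum]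

theorem continuous_vdiv (hF : ContDiff ℝ 1 F) : Continuous (vdiv F) := by
  have := hF.continuous_fderiv one_ne_zero
  unfold vdiv
  fun_prop

theorem integral_mul_vdiv (hw : ContDiff ℝ 1 w) (hwc : HasCompactSupport w)
    (hF : ContDiff ℝ 1 F) :
    ∫ x, w x * vdiv F x = -∫ x, fderiv ℝ w x (F x) := by
  have := hw.continuous_fderiv one_ne_zero
  have := hF.continuous_fderiv one_ne_zero
  have hFi (i : Fin n) (x : EuclideanSpace ℝ (Fin n)) : HasFDerivAt (fun y => F y i)
      ((EuclideanSpace.proj i : EuclideanSpace ℝ (Fin n) →L[ℝ] ℝ).comp (fderiv ℝ F x)) x :=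
    (EuclideanSpace.proj i : EuclideanSpace ℝ (Fin n) →L[ℝ] ℝ).hasFDerivAt.comp x
      (hF.differentiable one_ne_zero x).hasFDerivAt
  have hint_left (i : Fin n) :
      Integrable fun x => fderiv ℝ w x (EuclideanSpace.single i 1) * F x i :=
    Continuous.integrable_of_hasCompactSupport (by fun_prop)
      ((hwc.fderiv_apply ℝ _).mul_right)
  have hint_right (i : Fin n) :
      Integrable fun x => w x * fderiv ℝ F x (EuclideanSpace.single i 1) i :=
    Continuous.integrable_of_hasCompactSupport (by fun_prop) hwc.mul_right
  have hint (i : Fin n) : Integrable fun x => w x * F x i :=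
    Continuous.integrable_of_hasCompactSupport (by fun_prop) hwc.mul_right
  have hparts (i : Fin n) : ∫ x, w x * fderiv ℝ F x (EuclideanSpace.single i 1) i
      = -∫ x, fderiv ℝ w x (EuclideanSpace.single i 1) * F x i := by
    simpa [(hFi i _).fderiv] using
      integral_mul_fderiv_eq_neg_fderiv_mul_of_integrable (hint_left i)
        (by simpa [(hFi i _).fderiv] using hint_right i) (hint i)
        (fun x _ => hw.differentiable one_ne_zero x) fun x _ => (hFi i x).differentiableAt
  have hsum (x : EuclideanSpace ℝ (Fin n)) : fderiv ℝ w x (F x)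
      = ∑ i, fderiv ℝ w x (EuclideanSpace.single i 1) * F x i := (sum_apply_single_mul _ _).symm
  simp only [hsum, vdiv, Finset.mul_sum]
  rw [integral_finsetSum _ fun i _ => hint_right i, integral_finsetSum _ fun i _ => hint_left i,
    ← Finset.sum_neg_distrib]
  exact Finset.sum_congr rfl fun i _ => hparts i

end Divergence

section Gradient

variable {E : Type*} [NormedAddCommGroup E] [InnerProductSpace ℝ E] [CompleteSpace E]
  {f : E → ℝ} {φ : ℝ → ℝ} {x : E}

theorem contDiff_gradient {k l : WithTop ℕ∞} (hf : ContDiff ℝ l f) (hkl : k + 1 ≤ l) :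
    ContDiff ℝ k (gradient f) :=
  (InnerProductSpace.toDual ℝ E).symm.contDiff.comp (hf.fderiv_right hkl)

theorem inner_fderiv_gradient_left (hf : ContDiff ℝ 2 f) (v w : E) :
    ⟪fderiv ℝ (gradient f) x v, w⟫ = fderiv ℝ (fderiv ℝ f) x v w := by
  have hgrad : HasFDerivAt (fun y => ⟪gradient f y, w⟫) _ x :=
    ((contDiff_gradient hf one_add_one_eq_two.le).differentiable one_ne_zero
      x).hasFDerivAt.inner ℝ (hasFDerivAt_const w x)
  have hfderiv : HasFDerivAt (fun y => fderiv ℝ f y w) _ x :=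
    ((hf.fderiv_right one_add_one_eq_two.le).differentiable one_ne_zero
      x).hasFDerivAt.clm_apply (hasFDerivAt_const w x)
  simp only [inner_gradient_left] at hgrad
  simpa using DFunLike.congr_fun (hgrad.unique hfderiv) v

theorem inner_fderiv_gradient_comm (hf : ContDiff ℝ 2 f) (v w : E) :
    ⟪fderiv ℝ (gradient f) x v, w⟫ = ⟪fderiv ℝ (gradient f) x w, v⟫ := by
  rw [inner_fderiv_gradient_left hf, inner_fderiv_gradient_left hf,
    (hf.contDiffAt.isSymmSndFDerivAt (by simp)).eq]

theorem fderiv_comp_norm_sq_gradient (hφ : Differentiable ℝ φ)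
    (hf : DifferentiableAt ℝ (gradient f) x) (v : E) :
    fderiv ℝ (fun y => φ (‖gradient f y‖ ^ 2)) x v
      = 2 * (deriv φ (‖gradient f x‖ ^ 2) * ⟪gradient f x, fderiv ℝ (gradient f) x v⟫) := by
  have hchain : HasFDerivAt (fun y => φ (‖gradient f y‖ ^ 2)) _ x :=
    (hφ _).hasDerivAt.comp_hasFDerivAt x hf.hasFDerivAt.norm_sq
  simp [hchain.fderiv, mul_left_comm]

end Gradient

theorem fderiv_comp_pi_apply {ι : Type*} [Fintype ι] [DecidableEq ι] {E : Type*}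
    [NormedAddCommGroup E] [NormedSpace ℝ E] {G : (ι → ℝ) → ℝ} {u : ι → E → ℝ} {x : E}
    (hG : DifferentiableAt ℝ G fun j => u j x) (hu : ∀ i, DifferentiableAt ℝ (u i) x) (v : E) :
    fderiv ℝ (fun y => G fun j => u j y) x v
      = ∑ i, fderiv ℝ G (fun j => u j x) (Pi.single i 1) * fderiv ℝ (u i) x v := by
  have hchain : HasFDerivAt (fun y => G fun j => u j y) _ x :=
    hG.hasFDerivAt.comp x (hasFDerivAt_pi.2 fun i => (hu i).hasFDerivAt)
  have hv : (fun i => fderiv ℝ (u i) x v) = ∑ i, fderiv ℝ (u i) x v • Pi.single i (1 : ℝ) :=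
    pi_eq_sum_univ' _
  calc fderiv ℝ (fun y => G fun j => u j y) x v
      = fderiv ℝ G (fun j => u j x) fun i => fderiv ℝ (u i) x v := by rw [hchain.fderiv]; rfl
    _ = ∑ i, fderiv ℝ G (fun j => u j x) (Pi.single i 1) * fderiv ℝ (u i) x v := by
      rw [hv, map_sum]
      simp [mul_comm]

section GradientSystem

/-- The flux `Φ'(|∇u|²) ∇u` of the quasilinear operator `div (Φ'(|∇u|²) ∇u)`. -/
def flux {E : Type*} [NormedAddCommGroup E] [InnerProductSpace ℝ E] [CompleteSpace E]
    (φ : ℝ → ℝ) (f : E → ℝ) (x : E) : E :=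
  deriv φ (‖gradient f x‖ ^ 2) • gradient f x

/-- The flux weighted by twice `⟪∇u, x⟫`. With `e` the energy density, the stress-energy tensor
applied to `x` is `e(x) x` minus the sum of these fields over the components. -/
def radialFlux {E : Type*} [NormedAddCommGroup E] [InnerProductSpace ℝ E] [CompleteSpace E]
    (φ : ℝ → ℝ) (f : E → ℝ) (x : E) : E :=
  (2 * ⟪gradient f x, x⟫) • flux φ f x

/-- The energy density `∑ᵢ Φᵢ(|∇uᵢ|²) - 2 G(u)` of the system `-div (Φᵢ'(|∇uᵢ|²) ∇uᵢ) = ∂ᵢG(u)`. -/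
def energyDensity {ι E : Type*} [Fintype ι] [NormedAddCommGroup E] [InnerProductSpace ℝ E]
    [CompleteSpace E] (Φ : ι → ℝ → ℝ) (G : (ι → ℝ) → ℝ) (u : ι → E → ℝ) (x : E) : ℝ :=
  ∑ i, Φ i (‖gradient (u i) x‖ ^ 2) - 2 * G fun j => u j x

section Regularity

variable {ι E : Type*} [NormedAddCommGroup E] [InnerProductSpace ℝ E] [CompleteSpace E]
  {φ : ℝ → ℝ} {f : E → ℝ}

theorem contDiff_flux (hφ : ContDiff ℝ 2 φ) (hf : ContDiff ℝ 2 f) : ContDiff ℝ 1 (flux φ f) := by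
  have hgrad : ContDiff ℝ 1 (gradient f) := contDiff_gradient hf one_add_one_eq_two.le
  have hφ' : ContDiff ℝ 1 (deriv φ) := ContDiff.deriv' (by rwa [one_add_one_eq_two])
  exact (hφ'.comp (hgrad.norm_sq ℝ)).smul hgrad

theorem contDiff_radialFlux (hφ : ContDiff ℝ 2 φ) (hf : ContDiff ℝ 2 f) :
    ContDiff ℝ 1 (radialFlux φ f) :=
  (contDiff_const.mul ((contDiff_gradient hf one_add_one_eq_two.le).inner ℝ contDiff_id)).smul
    (contDiff_flux hφ hf)

theorem contDiff_energyDensity [Fintype ι] {Φ : ι → ℝ → ℝ} {G : (ι → ℝ) → ℝ} {u : ι → E → ℝ}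
    (hΦ : ∀ i, ContDiff ℝ 1 (Φ i)) (hG : ContDiff ℝ 1 G) (hu : ∀ i, ContDiff ℝ 2 (u i)) :
    ContDiff ℝ 1 (energyDensity Φ G u) :=
  (ContDiff.sum fun i _ =>
    (hΦ i).comp ((contDiff_gradient (hu i) one_add_one_eq_two.le).norm_sq ℝ)).sub
    (contDiff_const.mul (hG.comp (contDiff_pi.2 fun i => (hu i).of_le one_le_two)))

theorem inner_radialFlux_self_nonneg (hφ : ∀ s, 0 < s → 0 ≤ deriv φ s) (f : E → ℝ) (x : E) :
    0 ≤ ⟪radialFlux φ f x, x⟫ := by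
  by_cases hx : gradient f x = 0
  · simp [radialFlux, flux, hx]
  · have := hφ (‖gradient f x‖ ^ 2) (by positivity)
    calc 0 ≤ 2 * deriv φ (‖gradient f x‖ ^ 2) * ⟪gradient f x, x⟫ ^ 2 := by positivity
      _ = ⟪radialFlux φ f x, x⟫ := by
        simp only [radialFlux, flux, real_inner_smul_left]
        ring

end Regularity

variable {ι : Type*} {n : ℕ}

theorem vdiv_radialFlux {φ : ℝ → ℝ} {f : EuclideanSpace ℝ (Fin n) → ℝ} (hφ : ContDiff ℝ 2 φ)
    (hf : ContDiff ℝ 2 f) (x : EuclideanSpace ℝ (Fin n)) :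
    vdiv (radialFlux φ f) x = 2 * ⟪gradient f x, x⟫ * vdiv (flux φ f) x
      + fderiv ℝ (fun y => φ (‖gradient f y‖ ^ 2)) x x
      + 2 * (deriv φ (‖gradient f x‖ ^ 2) * ‖gradient f x‖ ^ 2) := by
  have hgrad : DifferentiableAt ℝ (gradient f) x :=
    (contDiff_gradient hf one_add_one_eq_two.le).differentiable one_ne_zero x
  have hradial : HasFDerivAt (fun y => 2 * ⟪gradient f y, y⟫) _ x :=
    (hgrad.hasFDerivAt.inner ℝ (hasFDerivAt_id x)).const_mul 2
  have hradial_apply (v : EuclideanSpace ℝ (Fin n)) : fderiv ℝ (fun y => 2 * ⟪gradient f y, y⟫) x v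
      = 2 * (⟪gradient f x, v⟫ + ⟪fderiv ℝ (gradient f) x v, x⟫) := by
    rw [hradial.fderiv]
    simp
  have hdiv : vdiv (radialFlux φ f) x = _ :=
    vdiv_smul hradial.differentiableAt ((contDiff_flux hφ hf).differentiable one_ne_zero x)
  have hsymm : ⟪fderiv ℝ (gradient f) x (gradient f x), x⟫
      = ⟪gradient f x, fderiv ℝ (gradient f) x x⟫ := by
    rw [inner_fderiv_gradient_comm hf, real_inner_comm]
  rw [hdiv, hradial_apply, fderiv_comp_norm_sq_gradient (hφ.differentiable two_ne_zero) hgrad,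
    flux, map_smul, real_inner_smul_left, real_inner_smul_right, hsymm, real_inner_self_eq_norm_sq]
  ring

variable [Fintype ι] [DecidableEq ι] {Φ : ι → ℝ → ℝ} {G : (ι → ℝ) → ℝ}
  {u : ι → EuclideanSpace ℝ (Fin n) → ℝ}

theorem fderiv_energyDensity_self (hΦ : ∀ i, ContDiff ℝ 2 (Φ i)) (hG : Differentiable ℝ G)
    (hu : ∀ i, ContDiff ℝ 2 (u i))
    (hsol : ∀ i x, -vdiv (flux (Φ i) (u i)) x = fderiv ℝ G (fun j => u j x) (Pi.single i 1))
    (x : EuclideanSpace ℝ (Fin n)) :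
    fderiv ℝ (energyDensity Φ G u) x x = vdiv (fun y => ∑ i, radialFlux (Φ i) (u i) y) x
      - ∑ i, 2 * (deriv (Φ i) (‖gradient (u i) x‖ ^ 2) * ‖gradient (u i) x‖ ^ 2) := by
  have hkin (i : ι) : DifferentiableAt ℝ (fun y => Φ i (‖gradient (u i) y‖ ^ 2)) x :=
    (((hΦ i).of_le one_le_two).comp
      ((contDiff_gradient (hu i) one_add_one_eq_two.le).norm_sq ℝ)).differentiable one_ne_zero x
  have hu' (i : ι) : DifferentiableAt ℝ (u i) x := (hu i).differentiable two_ne_zero x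
  have hpot : DifferentiableAt ℝ (fun y => G fun j => u j y) x :=
    (hG _).comp x (differentiableAt_pi.2 hu')
  have hfderiv : fderiv ℝ (energyDensity Φ G u) x = _ :=
    ((HasFDerivAt.fun_sum fun i _ => (hkin i).hasFDerivAt).fun_sub
      (hpot.hasFDerivAt.const_mul 2)).fderiv
  rw [hfderiv, vdiv_sum fun i _ =>
    (contDiff_radialFlux (hΦ i) (hu i)).differentiable one_ne_zero x]
  simp only [vdiv_radialFlux (hΦ _) (hu _), _root_.sub_apply, _root_.sum_apply, _root_.smul_apply,
    smul_eq_mul, fderiv_comp_pi_apply (hG _) hu', ← hsol, inner_gradient_left,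
    Finset.sum_add_distrib, Finset.mul_sum]
  rw [add_sub_cancel_right, add_comm, sub_eq_add_neg, ← Finset.sum_neg_distrib]
  congr! 2
  ring

theorem vdiv_sum_radialFlux_le (hΦ : ∀ i, ContDiff ℝ 2 (Φ i)) (hG : Differentiable ℝ G)
    (hu : ∀ i, ContDiff ℝ 2 (u i))
    (hsol : ∀ i x, -vdiv (flux (Φ i) (u i)) x = fderiv ℝ G (fun j => u j x) (Pi.single i 1))
    (hGu : ∀ x, G (fun j => u j x) ≤ 0) {α : ℝ} (hα₀ : 0 ≤ α)
    (hα : ∀ i s, 0 ≤ s → 2 * s * deriv (Φ i) s ≤ α * Φ i s) (x : EuclideanSpace ℝ (Fin n)) :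
    vdiv (fun y => ∑ i, radialFlux (Φ i) (u i) y) x
      ≤ α * energyDensity Φ G u x + fderiv ℝ (energyDensity Φ G u) x x := by
  have hkin : ∑ i, 2 * (deriv (Φ i) (‖gradient (u i) x‖ ^ 2) * ‖gradient (u i) x‖ ^ 2)
      ≤ α * ∑ i, Φ i (‖gradient (u i) x‖ ^ 2) := by
    rw [Finset.mul_sum]
    refine Finset.sum_le_sum fun i _ => ?_
    linarith [hα i (‖gradient (u i) x‖ ^ 2) (by positivity)]
  have hpot : α * G (fun j => u j x) ≤ 0 := mul_nonpos_of_nonneg_of_nonpos hα₀ (hGu x)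
  rw [fderiv_energyDensity_self hΦ hG hu hsol, energyDensity]
  linarith

end GradientSystem

section UnitBallCutoff

variable {E : Type*} [NormedAddCommGroup E]

/-- Smooth radial cutoffs supported in the closed unit ball, which tend pointwise to the indicator
function of the open unit ball as `k → ∞`. -/
def unitBallCutoff (k : ℕ) (x : E) : ℝ :=
  Real.smoothTransition (k * (1 - ‖x‖ ^ 2))

theorem continuous_unitBallCutoff (k : ℕ) : Continuous (unitBallCutoff k : E → ℝ) :=
  Real.smoothTransition.continuous.comp (by fun_prop)

theorem unitBallCutoff_nonneg (k : ℕ) (x : E) : 0 ≤ unitBallCutoff k x :=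
  Real.smoothTransition.nonneg _

theorem unitBallCutoff_le_one (k : ℕ) (x : E) : unitBallCutoff k x ≤ 1 :=
  Real.smoothTransition.le_one _

theorem unitBallCutoff_eq_zero (k : ℕ) {x : E} (hx : 1 ≤ ‖x‖) : unitBallCutoff k x = 0 :=
  Real.smoothTransition.zero_of_nonpos <|
    mul_nonpos_of_nonneg_of_nonpos k.cast_nonneg (sub_nonpos.2 (one_le_pow₀ hx))

theorem hasCompactSupport_unitBallCutoff [ProperSpace E] (k : ℕ) :
    HasCompactSupport (unitBallCutoff k : E → ℝ) :=
  HasCompactSupport.intro (isCompact_closedBall 0 1) fun _ hx =>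
    unitBallCutoff_eq_zero k (not_le.1 (mt mem_closedBall_zero_iff.2 hx)).le

theorem tendsto_unitBallCutoff {x : E} (hx : ‖x‖ < 1) :
    Tendsto (fun k => unitBallCutoff k x) atTop (nhds 1) := by
  have hpos : 0 < 1 - ‖x‖ ^ 2 := sub_pos.2 (pow_lt_one₀ (norm_nonneg x) hx two_ne_zero)
  have harg : Tendsto (fun k : ℕ => (k : ℝ) * (1 - ‖x‖ ^ 2)) atTop atTop :=
    tendsto_natCast_atTop_atTop.atTop_mul_const hpos
  refine tendsto_const_nhds.congr' ?_
  filter_upwards [harg.eventually_ge_atTop 1] with k hk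
  exact (Real.smoothTransition.one_of_one_le hk).symm

theorem tendsto_integral_unitBallCutoff_mul [MeasurableSpace E] [OpensMeasurableSpace E]
    {μ : Measure E} {g : E → ℝ} (hg : IntegrableOn g (ball 0 1) μ) :
    Tendsto (fun k => ∫ x, unitBallCutoff k x * g x ∂μ) atTop
      (nhds (∫ x in ball 0 1, g x ∂μ)) := by
  have hball (k : ℕ) : ∫ x in ball 0 1, unitBallCutoff k x * g x ∂μ
      = ∫ x, unitBallCutoff k x * g x ∂μ :=
    setIntegral_eq_integral_of_forall_compl_eq_zero fun x hx => by
      rw [unitBallCutoff_eq_zero k (by simpa using hx), zero_mul]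
  simp only [← hball]
  refine tendsto_integral_of_dominated_convergence (fun x => ‖g x‖)
    (fun k => (continuous_unitBallCutoff k).aestronglyMeasurable.mul hg.1) hg.norm
    (fun k => .of_forall fun x => ?_) (ae_restrict_of_forall_mem measurableSet_ball fun x hx => ?_)
  · rw [norm_mul, Real.norm_of_nonneg (unitBallCutoff_nonneg k x)]
    exact mul_le_of_le_one_left (norm_nonneg _) (unitBallCutoff_le_one k x)
  · simpa using (tendsto_unitBallCutoff (by simpa using hx)).mul_const (g x)

variable [InnerProductSpace ℝ E]

theorem contDiff_unitBallCutoff {l : ℕ∞} (k : ℕ) : ContDiff ℝ l (unitBallCutoff k : E → ℝ) :=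
  Real.smoothTransition.contDiff.comp
    (contDiff_const.mul (contDiff_const.sub (contDiff_norm_sq ℝ)))

theorem fderiv_unitBallCutoff_nonpos (k : ℕ) {x v : E} (h : 0 ≤ ⟪v, x⟫) :
    fderiv ℝ (unitBallCutoff k) x v ≤ 0 := by
  let χ : ℝ → ℝ := fun t => Real.smoothTransition (k * (1 - t))
  have hχ_anti : Antitone χ := fun s t hst => Real.smoothTransition.monotone (by gcongr)
  have hχ_diff : Differentiable ℝ χ :=
    ((Real.smoothTransition.contDiff (n := 1)).comp (by fun_prop)).differentiable one_ne_zero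
  have hχ_norm : HasFDerivAt (unitBallCutoff k) _ x :=
    HasDerivAt.comp_hasFDerivAt (h₂ := χ) x (hχ_diff _).hasDerivAt (hasFDerivAt_id x).norm_sq
  rw [hχ_norm.fderiv]
  simpa [real_inner_comm] using mul_nonpos_of_nonpos_of_nonneg hχ_anti.deriv_nonpos
    (mul_nonneg zero_le_two h)

end UnitBallCutoff

section Scaling

theorem hasDerivAt_integral_mul_comp_smul {E : Type*} [NormedAddCommGroup E] [NormedSpace ℝ E]
    [MeasurableSpace E] [OpensMeasurableSpace E] {μ : Measure E} [IsFiniteMeasureOnCompacts μ]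
    {w e : E → ℝ} (hw : Continuous w) (hwc : HasCompactSupport w) (he : ContDiff ℝ 1 e) (r : ℝ) :
    HasDerivAt (fun r : ℝ => ∫ y, w y * e (r • y) ∂μ)
      (∫ y, w y * fderiv ℝ e (r • y) y ∂μ) r := by
  have := he.continuous
  have := he.continuous_fderiv one_ne_zero
  obtain ⟨M, hM⟩ := ((isCompact_closedBall r 1).prod hwc).exists_bound_of_continuousOn
    (f := fun p : ℝ × E => fderiv ℝ e (p.1 • p.2) p.2) (by fun_prop)
  have hbound (y : E) (s : ℝ) (hs : s ∈ ball r 1) :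
      ‖w y * fderiv ℝ e (s • y) y‖ ≤ ‖w y‖ * M := by
    by_cases hy : y ∈ tsupport w
    · rw [norm_mul]
      gcongr
      exact hM (s, y) ⟨ball_subset_closedBall hs, hy⟩
    · simp [image_eq_zero_of_notMem_tsupport hy]
  have hint {g : E → ℝ} (hg : Continuous g) : Integrable (fun y => w y * g y) μ :=
    (hw.mul hg).integrable_of_hasCompactSupport hwc.mul_right
  have hdiff (y : E) (s : ℝ) :
      HasDerivAt (fun s : ℝ => w y * e (s • y)) (w y * fderiv ℝ e (s • y) y) s := by
    have hline : HasDerivAt (fun s : ℝ => s • y) y s := by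
      simpa using (hasDerivAt_id s).smul_const y
    exact ((he.differentiable one_ne_zero _).hasFDerivAt.comp_hasDerivAt s hline).const_mul _
  exact (hasDerivAt_integral_of_dominated_loc_of_deriv_le (ball_mem_nhds r one_pos)
    (.of_forall fun s => (hint (by fun_prop)).aestronglyMeasurable) (hint (by fun_prop))
    (hint (by fun_prop)).aestronglyMeasurable (.of_forall hbound)
    ((hw.integrable_of_hasCompactSupport hwc).norm.mul_const M)
    (.of_forall fun y s _ => hdiff y s)).2

theorem rpow_sub_mul_setIntegral_ball {E : Type*} [NormedAddCommGroup E] [NormedSpace ℝ E]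
    [FiniteDimensional ℝ E] [MeasurableSpace E] [BorelSpace E] (μ : Measure E) [μ.IsAddHaarMeasure]
    (f : E → ℝ) (α : ℝ) {r : ℝ} (hr : 0 < r) :
    r ^ (α - Module.finrank ℝ E) * ∫ x in ball 0 r, f x ∂μ
      = r ^ α * ∫ y in ball 0 1, f (r • y) ∂μ := by
  rw [Measure.setIntegral_comp_smul_of_pos μ f _ hr, smul_unitBall_of_pos hr, Real.rpow_sub hr,
    Real.rpow_natCast, smul_eq_mul, div_eq_mul_inv, mul_assoc]

variable {n : ℕ} {e w : EuclideanSpace ℝ (Fin n) → ℝ}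
  {F : EuclideanSpace ℝ (Fin n) → EuclideanSpace ℝ (Fin n)}

theorem integral_mul_vdiv_comp_smul_nonneg (hw : ContDiff ℝ 1 w) (hwc : HasCompactSupport w)
    (hw' : ∀ x v, 0 ≤ ⟪v, x⟫ → fderiv ℝ w x v ≤ 0) (hF : ContDiff ℝ 1 F)
    (hFr : ∀ x, 0 ≤ ⟪F x, x⟫) {r : ℝ} (hr : 0 < r) :
    0 ≤ ∫ y, w y * vdiv F (r • y) := by
  have hFr' (y : EuclideanSpace ℝ (Fin n)) : 0 ≤ ⟪F (r • y), y⟫ := by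
    have := hFr (r • y)
    rw [real_inner_smul_right] at this
    exact nonneg_of_mul_nonneg_right this hr
  have hparts : r * ∫ y, w y * vdiv F (r • y) = -∫ y, fderiv ℝ w y (F (r • y)) := by
    have hFs : ContDiff ℝ 1 fun y => F (r • y) := hF.comp (contDiff_const_smul r)
    rw [← integral_mul_vdiv hw hwc hFs, ← integral_const_mul]
    simp only [vdiv_comp_smul, mul_left_comm]
  refine nonneg_of_mul_nonneg_right (hparts ▸ neg_nonneg.2 ?_) hr
  exact integral_nonpos fun y => hw' y _ (hFr' y)

theorem monotoneOn_rpow_mul_integral_mul_comp_smul (hw : ContDiff ℝ 1 w)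
    (hwc : HasCompactSupport w) (hw₀ : ∀ x, 0 ≤ w x)
    (hw' : ∀ x v, 0 ≤ ⟪v, x⟫ → fderiv ℝ w x v ≤ 0) (he : ContDiff ℝ 1 e) (hF : ContDiff ℝ 1 F)
    (hFr : ∀ x, 0 ≤ ⟪F x, x⟫) {α : ℝ} (hFe : ∀ x, vdiv F x ≤ α * e x + fderiv ℝ e x x) :
    MonotoneOn (fun r : ℝ => r ^ α * ∫ y, w y * e (r • y)) (Set.Ioi 0) := by
  have hderiv (r : ℝ) (hr : 0 < r) := (Real.hasDerivAt_rpow_const (p := α) (.inl hr.ne')).mul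
    (hasDerivAt_integral_mul_comp_smul (μ := volume) hw.continuous hwc he r)
  have := he.continuous
  have := he.continuous_fderiv one_ne_zero
  have := continuous_vdiv hF
  have hint {g : EuclideanSpace ℝ (Fin n) → ℝ} (hg : Continuous g) :
      Integrable fun y => w y * g y :=
    (hw.continuous.mul hg).integrable_of_hasCompactSupport hwc.mul_right
  refine monotoneOn_of_hasDerivWithinAt_nonneg (convex_Ioi 0)
    (fun r hr => (hderiv r hr).continuousAt.continuousWithinAt)
    (fun r hr => (hderiv r (interior_subset hr)).hasDerivWithinAt) fun r hr => ?_
  have hr : 0 < r := interior_subset hr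
  calc 0 ≤ r ^ (α - 1) * ∫ y, w y * vdiv F (r • y) :=
        mul_nonneg (Real.rpow_nonneg hr.le _)
          (integral_mul_vdiv_comp_smul_nonneg hw hwc hw' hF hFr hr)
    _ ≤ r ^ (α - 1) * ∫ y, w y * (α * e (r • y) + fderiv ℝ e (r • y) (r • y)) := by
        refine mul_le_mul_of_nonneg_left (integral_mono (hint ?_) (hint ?_) fun y =>
          mul_le_mul_of_nonneg_left (hFe _) (hw₀ y)) (Real.rpow_nonneg hr.le _) <;> fun_prop
    _ = r ^ (α - 1) * (α * (∫ y, w y * e (r • y)) + r * ∫ y, w y * fderiv ℝ e (r • y) y) := by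
        rw [← integral_const_mul α, ← integral_const_mul r, ← integral_add
          ((hint (by fun_prop)).const_mul _) ((hint (by fun_prop)).const_mul _)]
        simp only [map_smul, smul_eq_mul, mul_add, mul_left_comm]
    _ = α * r ^ (α - 1) * (∫ y, w y * e (r • y))
          + r ^ α * ∫ y, w y * fderiv ℝ e (r • y) y := by
        rw [Real.rpow_sub_one hr.ne']
        field_simp

theorem monotoneOn_rpow_sub_mul_setIntegral_ball (he : ContDiff ℝ 1 e) (hF : ContDiff ℝ 1 F)
    (hFr : ∀ x, 0 ≤ ⟪F x, x⟫) {α : ℝ} (hFe : ∀ x, vdiv F x ≤ α * e x + fderiv ℝ e x x) :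
    MonotoneOn (fun r : ℝ => r ^ (α - n) * ∫ x in ball 0 r, e x) (Set.Ioi 0) := by
  have hscale : Set.EqOn (fun r : ℝ => r ^ α * ∫ y in ball 0 1, e (r • y))
      (fun r : ℝ => r ^ (α - n) * ∫ x in ball 0 r, e x) (Set.Ioi 0) := fun r hr => by
    simpa using (rpow_sub_mul_setIntegral_ball volume e α hr).symm
  refine MonotoneOn.congr ?_ hscale
  have hlim (r : ℝ) : Tendsto (fun k => r ^ α * ∫ y, unitBallCutoff k y * e (r • y)) atTop
      (nhds (r ^ α * ∫ y in ball 0 1, e (r • y))) :=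
    (tendsto_integral_unitBallCutoff_mul <|
      ((he.continuous.comp (continuous_const_smul r)).continuousOn.integrableOn_compact
        (isCompact_closedBall 0 1)).mono_set ball_subset_closedBall).const_mul _
  refine isClosed_monotoneOn.mem_of_tendsto (tendsto_pi_nhds.2 hlim) (.of_forall fun k => ?_)
  exact monotoneOn_rpow_mul_integral_mul_comp_smul (contDiff_unitBallCutoff k)
    (hasCompactSupport_unitBallCutoff k) (unitBallCutoff_nonneg k)
    (fun _ _ => fderiv_unitBallCutoff_nonpos k) he hF hFr hFe

end Scaling

theorem nonneg_of_forall_two_mul_deriv_div_le {φ : ℝ → ℝ} {α : ℝ} (hφ : ∀ s, 0 < s → 0 < φ s)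
    (hφ' : ∀ s, 0 < s → 0 < deriv φ s) (hα : ∀ s, 0 < s → 2 * s * deriv φ s / φ s ≤ α) :
    0 ≤ α := by
  have := hφ 1 one_pos
  have := hφ' 1 one_pos
  exact (by positivity : 0 ≤ 2 * 1 * deriv φ 1 / φ 1).trans (hα 1 one_pos)

theorem two_mul_deriv_le_of_div_le {φ : ℝ → ℝ} {α : ℝ} (hφ₀ : φ 0 = 0)
    (hφ : ∀ s, 0 < s → 0 < φ s) (hα : ∀ s, 0 < s → 2 * s * deriv φ s / φ s ≤ α) {s : ℝ}
    (hs : 0 ≤ s) : 2 * s * deriv φ s ≤ α * φ s := by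
  rcases hs.eq_or_lt with rfl | hs
  · simp [hφ₀]
  · exact (div_le_iff₀ (hφ s hs)).1 (hα s hs)

theorem weak_monotonicity_formula_general {ι : Type*} [Fintype ι] [DecidableEq ι] {n : ℕ}
    {Φ : ι → ℝ → ℝ} (hΦ : ∀ i, ContDiff ℝ 2 (Φ i)) (hΦ' : ∀ i s, 0 < s → 0 ≤ deriv (Φ i) s)
    {G : (ι → ℝ) → ℝ} (hG : ContDiff ℝ 1 G) {u : ι → EuclideanSpace ℝ (Fin n) → ℝ}
    (hu : ∀ i, ContDiff ℝ 2 (u i))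
    (hsol : ∀ i x, -vdiv (flux (Φ i) (u i)) x = fderiv ℝ G (fun j => u j x) (Pi.single i 1))
    (hGu : ∀ x, G (fun j => u j x) ≤ 0) {α : ℝ} (hα₀ : 0 ≤ α)
    (hα : ∀ i s, 0 ≤ s → 2 * s * deriv (Φ i) s ≤ α * Φ i s) :
    MonotoneOn (fun r : ℝ => r ^ (α - n) * ∫ x in ball 0 r, energyDensity Φ G u x) (Set.Ioi 0) :=
  monotoneOn_rpow_sub_mul_setIntegral_ball
    (contDiff_energyDensity (fun i => (hΦ i).of_le one_le_two) hG hu)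
    (ContDiff.sum fun i _ => contDiff_radialFlux (hΦ i) (hu i))
    (fun x => by
      rw [sum_inner]
      exact Finset.sum_nonneg fun i _ => inner_radialFlux_self_nonneg (hΦ' i) (u i) x)
    (vdiv_sum_radialFlux_le hΦ (hG.differentiable one_ne_zero) hu hsol hGu hα₀ hα)

/-- **Weak monotonicity formula**: for a solution of the quasilinear system
`-div(Φ'(|∇uᵢ|²)∇uᵢ) = Hᵢ(u)` with `H̃(u) ≤ 0` and `α ≥ 2sΦ'(s)/Φ(s)` for every `s > 0`,
the function `I_α(r) = r^{α-n} ∫_{B_r} (∑ᵢ Φ(|∇uᵢ|²) - 2H̃(u))` is nondecreasing in `r`. -/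
theorem weak_monotonicity_formula
    (n m : ℕ) (hn : 1 ≤ n) (hm : 2 ≤ m)
    (Φ : ℝ → ℝ) (hΦ : ContDiff ℝ 2 Φ) (hΦ0 : Φ 0 = 0)
    (hΦpos : ∀ s : ℝ, 0 < s → 0 < Φ s)
    (hΦ'pos : ∀ s : ℝ, 0 < s → 0 < deriv Φ s)
    (hΦell : ∀ s : ℝ, 0 < s → 0 < deriv Φ s + 2 * s * deriv (deriv Φ) s)
    (H : Fin m → (Fin m → ℝ) → ℝ) (hH : ∀ i, ContDiff ℝ 1 (H i))
    (Ht : (Fin m → ℝ) → ℝ) (hHt : ContDiff ℝ 2 Ht)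
    (hHtgrad : ∀ i y, fderiv ℝ Ht y (Pi.single i 1) = H i y)
    (u : Fin m → EuclideanSpace ℝ (Fin n) → ℝ)
    (hu : ∀ i, ContDiff ℝ 2 (u i))
    (hsol : ∀ i x, -vdiv (fun y => deriv Φ (‖gradient (u i) y‖ ^ 2) • gradient (u i) y) x
        = H i (fun j => u j x))
    (hHneg : ∀ x : EuclideanSpace ℝ (Fin n), Ht (fun j => u j x) ≤ 0)
    (α : ℝ) (hα : ∀ s : ℝ, 0 < s → 2 * s * deriv Φ s / Φ s ≤ α) :
    ∀ r₁ r₂ : ℝ, 0 < r₁ → r₁ ≤ r₂ →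
      r₁ ^ (α - (n : ℝ)) * (∫ x in ball (0 : EuclideanSpace ℝ (Fin n)) r₁,
          ((∑ i, Φ (‖gradient (u i) x‖ ^ 2)) - 2 * Ht (fun j => u j x)))
        ≤ r₂ ^ (α - (n : ℝ)) * (∫ x in ball (0 : EuclideanSpace ℝ (Fin n)) r₂,
          ((∑ i, Φ (‖gradient (u i) x‖ ^ 2)) - 2 * Ht (fun j => u j x))) := fun _ _ hr₁ hr₁₂ =>
  weak_monotonicity_formula_general (Φ := fun _ => Φ) (fun _ => hΦ) (fun _ s hs => (hΦ'pos s hs).le)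
    (hHt.of_le one_le_two) hu (fun i x => (hsol i x).trans (hHtgrad i _).symm) hHneg
    (nonneg_of_forall_two_mul_deriv_div_le hΦpos hΦ'pos hα)
    (fun _ _ => two_mul_deriv_le_of_div_le hΦ0 hΦpos hα) hr₁ (hr₁.trans_le hr₁₂) hr₁₂
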